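/- (Theorem: objective error of DUCA) Suppose the problem setup holds, each X_i is additionally compact, and the sequences (x^k)_{k≥1}, (y^k)_{k≥0}, (z^k)_{k≥0} are generated by DUCA. Then for every k ≥ 1, −R_1/k ≤ f(x̄^k) − f(x*) ≤ R_2/k, where R_1 := ‖y°‖·√(N·λ_1(P_A))·(‖y^0 − y*‖_A + ‖s^0 − s*‖_G) and R_2 := (1/(2ρ))·(v^0 − v*)ᵀH̃†(v^0 − v*) + ½‖y^0‖²_A. -/

import Mathlib

open Matrix
open scoped Kronecker

abbrev Blk (m p : ℕ) := Sum (Fin m) (Fin p)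
abbrev Idx (N m p : ℕ) := Fin N × Blk m p

def projK {N m p : ℕ} (y : Idx N m p → ℝ) : Idx N m p → ℝ :=
  fun ij =>
    match ij with
    | (i, Sum.inl j) => max (y (i, Sum.inl j)) 0
    | (i, Sum.inr j) => y (i, Sum.inr j)

def projKpolar {N m p : ℕ} (y : Idx N m p → ℝ) : Idx N m p → ℝ :=
  fun ij =>
    match ij with
    | (i, Sum.inl j) => min (y (i, Sum.inl j)) 0
    | (_, Sum.inr _) => 0

def memK {N m p : ℕ} (y : Idx N m p → ℝ) : Prop :=
  ∀ (i : Fin N) (j : Fin m), 0 ≤ y (i, Sum.inl j)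

def IsMPInv {n : Type*} [Fintype n] [DecidableEq n] (M Md : Matrix n n ℝ) : Prop :=
  M * Md * M = M ∧ Md * M * Md = Md ∧ (M * Md)ᵀ = M * Md ∧ (Md * M)ᵀ = Md * M

def quadForm {n : Type*} [Fintype n] (M : Matrix n n ℝ) (w : n → ℝ) : ℝ :=
  w ⬝ᵥ (M *ᵥ w)

/-!
The step `y ↦ 𝒫_K[⋯]` makes the constraint value at `x^{k+1}` an explicit affine function of the
dual iterates up to an element of `K°` orthogonal to `y^{k+1}`, and the optimality of `x^{k+1}`
says that it minimizes the Lagrangian with multiplier `y^{k+1}`. Together with the dual step these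
give, for every consensus multiplier `q ∈ K`, one energy inequality: the Lagrangian gap
`f(x^{k+1}) + ⟨q, g̃(x^{k+1})⟩ - f(x*)` is at most the decrease of `½‖(y^k - q, z^k - ζ)‖_G²`, where
`ζ` is any point such that `H̃^{1/2} ζ` is the component of `g̃(x*)` orthogonal to consensus.

Telescoping with `q = 0` and using Jensen's inequality gives the upper bound; the `ζ` with
`‖z^0 - ζ‖² = (v^0 - v*)ᵀ H̃† (v^0 - v*)` yields the constant `R_2`. With `q = y*` the gap is
nonnegative, so `‖s^k - s*‖_G` is nonincreasing. Since consensus vectors are annihilated by `H` and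
`H̃^{1/2}`, pairing the constraint values with `y*` telescopes to `⟨y*, A (y^k - y^0)⟩ / k`, and
Cauchy–Schwarz followed by the monotonicity of `‖s^k - s*‖_G` gives the lower bound.
-/

section Convexity

lemma nonneg_of_forall_mul_add_sq_mul_nonneg {α C : ℝ}
    (h : ∀ t : ℝ, 0 < t → t ≤ 1 → 0 ≤ t * α + t ^ 2 * C) : 0 ≤ α := by
  have hlim : Filter.Tendsto (fun t : ℝ ↦ α + t * C) (nhdsWithin 0 (Set.Ioi 0)) (nhds α) :=
    tendsto_nhdsWithin_of_tendsto_nhds (Continuous.tendsto' (by fun_prop) _ _ (by simp))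
  refine ge_of_tendsto hlim ?_
  filter_upwards [Ioc_mem_nhdsGT (zero_lt_one (α := ℝ))] with t ht
  refine nonneg_of_mul_nonneg_right ?_ ht.1
  linear_combination h t ht.1 ht.2

lemma sum_Icc_le_sub_of_forall_le_sub {a V : ℕ → ℝ} (h : ∀ l, a (l + 1) ≤ V l - V (l + 1))
    (k : ℕ) : ∑ l ∈ Finset.Icc 1 k, a l ≤ V 0 - V k := by
  induction k with
  | zero => simp
  | succ k ih =>
    rw [Finset.sum_Icc_succ_top (by omega)]
    linarith [h k]

lemma mem_of_mem_Icc_of_forall_succ_mem {E : Type*} {X : Set E} {x : ℕ → E}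
    (hx : ∀ l, x (l + 1) ∈ X) {k l : ℕ} (hl : l ∈ Finset.Icc 1 k) : x l ∈ X :=
  Nat.sub_add_cancel (Finset.mem_Icc.1 hl).1 ▸ hx (l - 1)

variable {E : Type*} [AddCommGroup E] [Module ℝ E] {X : Set E}

lemma convexOn_finset_sum {ι : Type*} {s : Finset ι} {Φ : ι → E → ℝ} (hX : Convex ℝ X)
    (h : ∀ i ∈ s, ConvexOn ℝ X (Φ i)) : ConvexOn ℝ X fun w ↦ ∑ i ∈ s, Φ i w := by
  simpa only [Finset.sum_fn] using
    Finset.sum_induction Φ (ConvexOn ℝ X) (fun _ _ ↦ ConvexOn.add) (convexOn_const 0 hX) h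

lemma convex_inv_card_smul_sum_mem {ι : Type*} {s : Finset ι} {x : ι → E} (hX : Convex ℝ X)
    (hs : s.Nonempty) (hx : ∀ i ∈ s, x i ∈ X) : (s.card : ℝ)⁻¹ • ∑ i ∈ s, x i ∈ X := by
  rw [Finset.smul_sum]
  exact hX.sum_mem (fun _ _ ↦ by positivity) (by simp [hs.ne_empty]) hx

lemma convexOn_map_inv_card_smul_sum_le {ι : Type*} {s : Finset ι} {x : ι → E} {Φ : E → ℝ}
    (hΦ : ConvexOn ℝ X Φ) (hs : s.Nonempty) (hx : ∀ i ∈ s, x i ∈ X) :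
    Φ ((s.card : ℝ)⁻¹ • ∑ i ∈ s, x i) ≤ (s.card : ℝ)⁻¹ * ∑ i ∈ s, Φ (x i) := by
  rw [Finset.smul_sum, Finset.mul_sum]
  exact hΦ.map_sum_le (fun _ _ ↦ by positivity) (by simp [hs.ne_empty]) hx

lemma convexOn_map_average_sub_le_of_telescoping {Φ : E → ℝ} (hΦ : ConvexOn ℝ X Φ) {x : ℕ → E}
    (hx : ∀ l, x (l + 1) ∈ X) {c : ℝ} {V : ℕ → ℝ}
    (hV : ∀ l, Φ (x (l + 1)) - c ≤ V l - V (l + 1)) {k : ℕ} (hk : 1 ≤ k) :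
    Φ ((k : ℝ)⁻¹ • ∑ l ∈ Finset.Icc 1 k, x l) - c ≤ (V 0 - V k) / k := by
  have hk₀ : (0 : ℝ) < k := by exact_mod_cast hk
  have hjensen := convexOn_map_inv_card_smul_sum_le (s := Finset.Icc 1 k) hΦ
    (Finset.nonempty_Icc.2 hk) fun _ ↦ mem_of_mem_Icc_of_forall_succ_mem hx
  have hsum := sum_Icc_le_sub_of_forall_le_sub (a := fun l ↦ Φ (x l) - c) hV k
  simp only [Finset.sum_sub_distrib, Finset.sum_const, Nat.card_Icc, Nat.add_sub_cancel,
    nsmul_eq_mul] at hjensen hsum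
  rw [← div_eq_inv_mul, le_div_iff₀ hk₀] at hjensen
  rw [le_div_iff₀ hk₀]
  linarith

end Convexity

section LinearAlgebra

variable {ι : Type*} [Fintype ι]

lemma dotProduct_mulVec_comm_of_isSymm {M : Matrix ι ι ℝ} (hM : M.IsSymm) (u v : ι → ℝ) :
    u ⬝ᵥ M *ᵥ v = v ⬝ᵥ M *ᵥ u := by
  rw [dotProduct_mulVec, ← mulVec_transpose, hM.eq, dotProduct_comm]

lemma dotProduct_mulVec_eq_zero_of_isSymm {M : Matrix ι ι ℝ} (hM : M.IsSymm) {q : ι → ℝ}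
    (hq : M *ᵥ q = 0) (v : ι → ℝ) : q ⬝ᵥ M *ᵥ v = 0 := by
  rw [dotProduct_mulVec_comm_of_isSymm hM, hq, dotProduct_zero]

lemma isSymm_of_posSemidef {ι : Type*} {M : Matrix ι ι ℝ} (hM : M.PosSemidef) : M.IsSymm :=
  isHermitian_iff_isSymm.1 hM.1

lemma quadForm_nonneg {M : Matrix ι ι ℝ} (hM : M.PosSemidef) (v : ι → ℝ) : 0 ≤ quadForm M v :=
  hM.dotProduct_mulVec_nonneg v

lemma quadForm_mul_self {S : Matrix ι ι ℝ} (hS : S.IsSymm) (v : ι → ℝ) :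
    quadForm (S * S) v = S *ᵥ v ⬝ᵥ S *ᵥ v := by
  rw [quadForm, ← mulVec_mulVec, dotProduct_mulVec_comm_of_isSymm hS]

lemma quadForm_sub_le_two_mul {M : Matrix ι ι ℝ} (hM : M.PosSemidef) (u v : ι → ℝ) :
    quadForm M u - quadForm M v ≤ 2 * (u ⬝ᵥ M *ᵥ (u - v)) := by
  have h := quadForm_nonneg hM (u - v)
  simp only [quadForm, mulVec_sub, dotProduct_sub, sub_dotProduct] at h ⊢
  linarith [dotProduct_mulVec_comm_of_isSymm (isSymm_of_posSemidef hM) u v]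

lemma abs_dotProduct_mulVec_le {M : Matrix ι ι ℝ} (hM : M.PosSemidef) (u v : ι → ℝ) :
    |u ⬝ᵥ M *ᵥ v| ≤ √(quadForm M u) * √(quadForm M v) := by
  classical
  have h := (toBilin' M).apply_sq_le_of_symm
    (fun w ↦ by simpa only [toBilin'_apply', quadForm] using quadForm_nonneg hM w)
    ⟨fun a b ↦ by
      simpa only [toBilin'_apply', RingHom.id_apply] using
        dotProduct_mulVec_comm_of_isSymm (isSymm_of_posSemidef hM) a b⟩ u v
  simp only [toBilin'_apply'] at h
  rw [← Real.sqrt_mul (quadForm_nonneg hM u)]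
  exact Real.abs_le_sqrt h

lemma quadForm_le_mul_dotProduct_self {n : Type*} [Fintype n] {P : Matrix n n ℝ}
    (hP : P.IsSymm) {l : ℝ} (hl : ∀ (μ : ℝ) (v : n → ℝ), v ≠ 0 → P *ᵥ v = μ • v → μ ≤ l)
    (v : n → ℝ) : quadForm P v ≤ l * (v ⬝ᵥ v) := by
  classical
  have hH : (l • (1 : Matrix n n ℝ) - P).IsHermitian :=
    isHermitian_iff_isSymm.2 ((isSymm_one.smul l).sub hP)
  have hpos : (l • (1 : Matrix n n ℝ) - P).PosSemidef := by
    refine hH.posSemidef_iff_eigenvalues_nonneg.2 fun i ↦ ?_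
    have hne : (hH.eigenvectorBasis i).ofLp ≠ 0 := fun h ↦
      hH.eigenvectorBasis.orthonormal.ne_zero i ((WithLp.ofLp_eq_zero 2).1 h)
    have heig := hH.mulVec_eigenvectorBasis i
    rw [sub_mulVec, smul_mulVec, one_mulVec] at heig
    exact sub_le_self_iff _ |>.1 <|
      hl (l - hH.eigenvalues i) _ hne (by rw [sub_smul, ← heig, sub_sub_cancel])
  have h := quadForm_nonneg hpos v
  simp only [quadForm, sub_mulVec, smul_mulVec, one_mulVec, dotProduct_sub, dotProduct_smul,
    smul_eq_mul] at h ⊢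
  linarith

lemma inv_eq_diagonal_of_isDiag [DecidableEq ι] {M : Matrix ι ι ℝ} (hM : M.IsDiag)
    (h₀ : ∀ i, M i i ≠ 0) : M⁻¹ = diagonal fun i ↦ (M i i)⁻¹ := by
  refine inv_eq_left_inv ?_
  conv_lhs => rw [← hM.diagonal_diag, diagonal_mul_diagonal]
  simp [h₀]

lemma IsMPInv.mulVec_sub_mulVec_mulVec_eq_zero [DecidableEq ι] {S Sd : Matrix ι ι ℝ}
    (h : IsMPInv S Sd) (hS : S.IsSymm) (τ : ι → ℝ) : S *ᵥ (τ - S *ᵥ Sd *ᵥ τ) = 0 := by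
  have hproj : S * (S * Sd) = S := by
    rw [← h.2.2.1]
    simpa only [transpose_mul, hS.eq, Matrix.mul_assoc] using congrArg transpose h.1
  rw [mulVec_sub, mulVec_mulVec, mulVec_mulVec, Matrix.mul_assoc, hproj, sub_self]

lemma mul_self_mul_mul_self_cancel_right {S Md : Matrix ι ι ℝ} (hS : S.IsSymm)
    (h : S * S * Md * (S * S) = S * S) : S * S * Md * S = S := by
  classical
  have h₀ : (S * S * Md - 1) * (S * Sᴴ) = 0 := by
    rw [conjTranspose_eq_transpose_of_trivial, hS.eq, sub_mul, h, one_mul, sub_self]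
  rw [mul_self_mul_conjTranspose_eq_zero, sub_mul, one_mul] at h₀
  exact sub_eq_zero.1 h₀

lemma exists_mulVec_eq_and_dotProduct_self_eq_quadForm {S Md : Matrix ι ι ℝ} (hS : S.IsSymm)
    (h : S * S * Md * (S * S) = S * S) (z ζ : ι → ℝ) :
    ∃ ζ', S *ᵥ ζ' = S *ᵥ ζ ∧ (z - ζ') ⬝ᵥ (z - ζ') = quadForm Md (S *ᵥ z - S *ᵥ ζ) := by
  have hcancel (u : ι → ℝ) : S *ᵥ S *ᵥ Md *ᵥ S *ᵥ u = S *ᵥ u := by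
    simp only [mulVec_mulVec, ← Matrix.mul_assoc, mul_self_mul_mul_self_cancel_right hS h]
  refine ⟨z - S *ᵥ Md *ᵥ S *ᵥ (z - ζ), ?_, ?_⟩
  · rw [mulVec_sub, hcancel, mulVec_sub, sub_sub_cancel]
  · rw [sub_sub_cancel, dotProduct_mulVec_comm_of_isSymm hS, hcancel, ← mulVec_sub, quadForm,
      dotProduct_comm]

end LinearAlgebra

section Cone

variable {N m p : ℕ}

/-- Membership in the polar cone `K°` of the multiplier cone `K`. -/
def memKpolar (σ : Idx N m p → ℝ) : Prop :=
  (∀ i j, σ (i, .inl j) ≤ 0) ∧ ∀ i j, σ (i, .inr j) = 0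

lemma projK_add_projKpolar (u : Idx N m p → ℝ) : projK u + projKpolar u = u := by
  ext ⟨i, j | j⟩
  · exact (max_add_min _ _).trans (add_zero _)
  · exact add_zero _

lemma projK_mul_projKpolar (u : Idx N m p → ℝ) : projK u * projKpolar u = 0 := by
  ext ⟨i, j | j⟩
  · exact (max_mul_min _ _).trans (mul_zero _)
  · exact mul_zero _

lemma diagonal_mulVec_projK_dotProduct_projKpolar (e u : Idx N m p → ℝ) :
    diagonal e *ᵥ projK u ⬝ᵥ projKpolar u = 0 := by
  refine Finset.sum_eq_zero fun i _ ↦ ?_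
  rw [mulVec_diagonal, mul_assoc, ← Pi.mul_apply, projK_mul_projKpolar, Pi.zero_apply, mul_zero]

lemma memK_projK (u : Idx N m p → ℝ) : memK (projK u) :=
  fun _ _ ↦ le_max_right _ _

lemma memKpolar_projKpolar (u : Idx N m p → ℝ) : memKpolar (projKpolar u) :=
  ⟨fun _ _ ↦ min_le_right _ _, fun _ _ ↦ rfl⟩

lemma memK.dotProduct_nonpos {q σ : Idx N m p → ℝ} (hq : memK q) (hσ : memKpolar σ) :
    q ⬝ᵥ σ ≤ 0 := by
  refine Finset.sum_nonpos ?_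
  rintro ⟨i, j | j⟩ -
  · exact mul_nonpos_of_nonneg_of_nonpos (hq i j) (hσ.1 i j)
  · rw [hσ.2, mul_zero]

lemma projK_diagonal_mulVec {e : Idx N m p → ℝ} (he : 0 ≤ e) (u : Idx N m p → ℝ) :
    projK (diagonal e *ᵥ u) = diagonal e *ᵥ projK u := by
  ext ⟨i, j | j⟩
  · simp only [projK, mulVec_diagonal, mul_max_of_nonneg _ _ (he _), mul_zero]
  · simp only [projK, mulVec_diagonal]

lemma sq_max_zero_le_of_le_add {u b c : ℝ} (h : c ≤ u + b) :
    max c 0 ^ 2 ≤ max u 0 ^ 2 + 2 * max u 0 * b + b ^ 2 := by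
  rcases le_total c 0 with hc | hc <;> rcases le_total u 0 with hu | hu <;>
    simp only [hc, hu, max_eq_left, max_eq_right] <;> nlinarith [sq_nonneg b, sq_nonneg (u + b)]

lemma sq_projK_le_of_memKpolar_sub {u b v : Idx N m p → ℝ} (h : memKpolar (v - (u + b)))
    (i : Idx N m p) :
    projK v i ^ 2 ≤ projK u i ^ 2 + 2 * projK u i * b i + b i ^ 2 := by
  obtain ⟨i, j | j⟩ := i
  · exact sq_max_zero_le_of_le_add (sub_nonpos.1 (h.1 i j))
  · have hv : v (i, .inr j) = u (i, .inr j) + b (i, .inr j) := sub_eq_zero.1 (h.2 i j)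
    simp only [projK, hv]
    exact le_of_eq (by ring)

lemma quadForm_diagonal {ι : Type*} [Fintype ι] [DecidableEq ι] (e v : ι → ℝ) :
    quadForm (diagonal e) v = ∑ i, e i * v i ^ 2 := by
  refine Finset.sum_congr rfl fun i _ ↦ ?_
  rw [mulVec_diagonal]
  ring

lemma quadForm_diagonal_projK_le_of_memKpolar_sub {e : Idx N m p → ℝ} (he : 0 ≤ e)
    {u b v : Idx N m p → ℝ} (h : memKpolar (v - (u + b))) :
    quadForm (diagonal e) (projK v) ≤ quadForm (diagonal e) (projK u)
      + 2 * (diagonal e *ᵥ projK u ⬝ᵥ b) + quadForm (diagonal e) b := by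
  simp only [quadForm_diagonal, dotProduct, mulVec_diagonal, Finset.mul_sum,
    ← Finset.sum_add_distrib]
  refine Finset.sum_le_sum fun i _ ↦ ?_
  linarith [mul_le_mul_of_nonneg_left (sq_projK_le_of_memKpolar_sub h i) (he i)]

end Cone

section KConvex

variable {N m p : ℕ} {E : Type*} [AddCommGroup E] [Module ℝ E] {X : Set E} {F : E → ℝ}
  {G : E → Idx N m p → ℝ}

/-- Convexity with respect to the order whose nonpositive elements are `K°`: the inequality
components of `G` are convex on `X` and the equality components are affine on `X`. -/
def IsKConvexOn (X : Set E) (G : E → Idx N m p → ℝ) : Prop :=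
  Convex ℝ X ∧ ∀ ⦃x⦄, x ∈ X → ∀ ⦃w⦄, w ∈ X → ∀ ⦃s t : ℝ⦄, 0 ≤ s → 0 ≤ t → s + t = 1 →
    memKpolar (G (s • x + t • w) - (s • G x + t • G w))

lemma IsKConvexOn.convexOn_dotProduct (hG : IsKConvexOn X G) {q : Idx N m p → ℝ} (hq : memK q) :
    ConvexOn ℝ X fun w ↦ q ⬝ᵥ G w := by
  refine ⟨hG.1, fun x hx w hw s t hs ht hst ↦ ?_⟩
  have h := hq.dotProduct_nonpos (hG.2 hx hw hs ht hst)
  simpa only [dotProduct_sub, dotProduct_add, dotProduct_smul, sub_nonpos] using h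

lemma lagrangian_le_of_isMinOn (hF : ConvexOn ℝ X F) (hG : IsKConvexOn X G)
    {e : Idx N m p → ℝ} (he : 0 ≤ e) {a : Idx N m p → ℝ} {x w : E} (hx : x ∈ X) (hw : w ∈ X)
    (hmin : IsMinOn (fun w ↦ F w + 1 / 2 * quadForm (diagonal e) (projK (a + G w))) X x) :
    F x + diagonal e *ᵥ projK (a + G x) ⬝ᵥ G x ≤ F w + diagonal e *ᵥ projK (a + G x) ⬝ᵥ G w := by
  set y := diagonal e *ᵥ projK (a + G x)
  suffices h : 0 ≤ F w - F x + y ⬝ᵥ (G w - G x) by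
    rw [dotProduct_sub] at h
    linarith
  refine nonneg_of_forall_mul_add_sq_mul_nonneg
    (C := 1 / 2 * quadForm (diagonal e) (G w - G x)) fun t ht₀ ht₁ ↦ ?_
  have ht₁' : 0 ≤ 1 - t := sub_nonneg.2 ht₁
  have hst : 1 - t + t = 1 := sub_add_cancel 1 t
  have hFt := hF.2 hx hw ht₁' ht₀.le hst
  have hle := isMinOn_iff.1 hmin _ (hF.1 hx hw ht₁' ht₀.le hst)
  have hpolar : memKpolar (a + G ((1 - t) • x + t • w) - (a + G x + t • (G w - G x))) := by
    convert hG.2 hx hw ht₁' ht₀.le hst using 1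
    module
  have hdescent := quadForm_diagonal_projK_le_of_memKpolar_sub he hpolar
  simp only [quadForm, mulVec_smul, dotProduct_smul, smul_dotProduct, smul_eq_mul]
    at hFt hle hdescent ⊢
  linarith

end KConvex

/-- The squared norm `‖(y, z)‖_G² = ‖y‖_A² + ‖z‖² / ρ` on primal-dual pairs. -/
noncomputable def gNormSq {ι : Type*} [Fintype ι] (ρ : ℝ) (A : Matrix ι ι ℝ) (y z : ι → ℝ) : ℝ :=
  quadForm A y + (z ⬝ᵥ z) / ρ

section Energy

variable {ι : Type*} [Fintype ι] {ρ : ℝ} {A H S : Matrix ι ι ℝ}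

lemma quadForm_le_gNormSq (hρ : 0 ≤ ρ) (y z : ι → ℝ) : quadForm A y ≤ gNormSq ρ A y z :=
  le_add_of_nonneg_right (div_nonneg (dotProduct_self_star_nonneg z) hρ)

lemma gNormSq_nonneg (hρ : 0 ≤ ρ) (hA : A.PosSemidef) (y z : ι → ℝ) : 0 ≤ gNormSq ρ A y z :=
  (quadForm_nonneg hA y).trans (quadForm_le_gNormSq hρ y z)

lemma dotProduct_self_dual_step (hρ : ρ ≠ 0) (hS : S.IsSymm) (y z ζ : ι → ℝ) :
    ((z + ρ • S *ᵥ y - ζ) ⬝ᵥ (z + ρ • S *ᵥ y - ζ)) / ρ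
      = ((z - ζ) ⬝ᵥ (z - ζ)) / ρ + 2 * (y ⬝ᵥ S *ᵥ (z - ζ)) + ρ * quadForm (S * S) y := by
  rw [quadForm_mul_self hS, dotProduct_mulVec_comm_of_isSymm hS, add_sub_right_comm]
  simp only [dotProduct_add, add_dotProduct, dotProduct_smul, smul_dotProduct, smul_eq_mul,
    dotProduct_comm (S *ᵥ y) (z - ζ)]
  field

lemma gNormSq_sub_gNormSq_le_of_dual_step (hρ : 0 < ρ) (hA : A.PosSemidef) (hH : H.IsSymm)
    (hS : S.IsSymm) (hHS : ((2 : ℝ) • H - S * S).PosSemidef) {y y' z ζ q τ π : ι → ℝ}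
    (hτ : τ = (A + ρ • H) *ᵥ y' + π - A *ᵥ y + S *ᵥ z) (hπ : 0 ≤ (y' - q) ⬝ᵥ π)
    (hHq : H *ᵥ q = 0) (hSq : S *ᵥ q = 0) :
    gNormSq ρ A (y' - q) (z + ρ • S *ᵥ y' - ζ) - gNormSq ρ A (y - q) (z - ζ)
      ≤ 2 * ((y' - q) ⬝ᵥ τ - y' ⬝ᵥ S *ᵥ ζ) := by
  have hprimal := quadForm_sub_le_two_mul hA (y' - q) (y - q)
  have hcoercive := mul_nonneg hρ.le (quadForm_nonneg hHS y')
  have hpair : (y' - q) ⬝ᵥ τ = (y' - q) ⬝ᵥ A *ᵥ (y' - y) + ρ * quadForm H y' + (y' - q) ⬝ᵥ π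
      + y' ⬝ᵥ S *ᵥ z := by
    simp only [hτ, quadForm, add_mulVec, smul_mulVec, mulVec_sub, sub_dotProduct, dotProduct_add,
      dotProduct_sub, dotProduct_smul, smul_eq_mul, dotProduct_mulVec_eq_zero_of_isSymm hH hHq,
      dotProduct_mulVec_eq_zero_of_isSymm hS hSq]
    ring
  have hquad : quadForm ((2 : ℝ) • H - S * S) y' = 2 * quadForm H y' - quadForm (S * S) y' := by
    simp only [quadForm, sub_mulVec, smul_mulVec, dotProduct_sub, dotProduct_smul, smul_eq_mul]
  rw [gNormSq, gNormSq, dotProduct_self_dual_step hρ.ne' hS, mulVec_sub S, dotProduct_sub y', hpair]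
  rw [sub_sub_sub_cancel_right] at hprimal
  rw [hquad] at hcoercive
  linarith

end Energy

section Consensus

lemma comp_snd_dotProduct {ι κ : Type*} [Fintype ι] [Fintype κ] (q : κ → ℝ) (w : ι × κ → ℝ) :
    (q ∘ Prod.snd) ⬝ᵥ w = ∑ j, q j * ∑ i, w (i, j) := by
  simp only [dotProduct, Fintype.sum_prod_type_right, Function.comp_apply, Finset.mul_sum]

variable {N m p : ℕ}

/-- The properties of the weight matrices `A`, `H` and `S = H̃^{1/2}` which drive the convergence
analysis. The field `posSemidef_sub` says that `H̃` is dominated by `2 H`, and `q ∘ Prod.snd` is the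
consensus vector `1_N ⊗ q`. -/
structure IsAdmissible (ρ : ℝ) (A H S : Matrix (Idx N m p) (Idx N m p) ℝ) : Prop where
  rho_pos : 0 < ρ
  posSemidef : A.PosSemidef
  isSymm_H : H.IsSymm
  isSymm_S : S.IsSymm
  posSemidef_sub : ((2 : ℝ) • H - S * S).PosSemidef
  isDiag : (A + ρ • H).IsDiag
  posDef : (A + ρ • H).PosDef
  mulVec_consensus_H : ∀ q : Blk m p → ℝ, H *ᵥ (q ∘ Prod.snd) = 0
  mulVec_S_eq_zero_iff : ∀ v, S *ᵥ v = 0 ↔ ∃ q : Blk m p → ℝ, v = q ∘ Prod.snd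

variable {ρ : ℝ} {A H S : Matrix (Idx N m p) (Idx N m p) ℝ}

lemma IsAdmissible.mulVec_consensus_S (hM : IsAdmissible ρ A H S) (q : Blk m p → ℝ) :
    S *ᵥ (q ∘ Prod.snd) = 0 :=
  (hM.mulVec_S_eq_zero_iff _).2 ⟨q, rfl⟩

lemma IsAdmissible.exists_inv_eq_diagonal (hM : IsAdmissible ρ A H S) :
    ∃ e, 0 ≤ e ∧ (A + ρ • H)⁻¹ = diagonal e :=
  ⟨_, fun _ ↦ inv_nonneg.2 hM.posDef.diag_pos.le,
    inv_eq_diagonal_of_isDiag hM.isDiag fun _ ↦ hM.posDef.diag_pos.ne'⟩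

lemma IsAdmissible.sum_mulVec_S_eq_zero (hM : IsAdmissible ρ A H S) (ζ : Idx N m p → ℝ)
    (j : Blk m p) : ∑ i, (S *ᵥ ζ) (i, j) = 0 := by
  simpa only [comp_snd_dotProduct, Pi.single_apply, ite_mul, one_mul, zero_mul,
    Finset.sum_ite_eq', Finset.mem_univ, if_true] using
    dotProduct_mulVec_eq_zero_of_isSymm hM.isSymm_S (hM.mulVec_consensus_S (Pi.single j 1)) ζ

lemma IsAdmissible.memKpolar_sub_mulVec_S (hM : IsAdmissible ρ A H S) {τ ζ : Idx N m p → ℝ}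
    (hinl : ∀ j, ∑ i, τ (i, .inl j) ≤ 0) (hinr : ∀ j, ∑ i, τ (i, .inr j) = 0)
    (hζ : S *ᵥ (τ - S *ᵥ ζ) = 0) : memKpolar (τ - S *ᵥ ζ) := by
  obtain ⟨r, hr⟩ := (hM.mulVec_S_eq_zero_iff _).1 hζ
  have hsum (j : Blk m p) : N * r j = ∑ i, τ (i, j) := by
    have h := congrArg (fun v ↦ ∑ i, v (i, j)) hr
    simpa [Finset.sum_sub_distrib, hM.sum_mulVec_S_eq_zero] using h.symm
  have hN (i : Fin N) : (0 : ℝ) < N := by exact_mod_cast i.pos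
  rw [hr]
  refine ⟨fun i j ↦ nonpos_of_mul_nonpos_right ?_ (hN i), fun i j ↦ ?_⟩
  · exact (hsum _).trans_le (hinl j)
  · exact (mul_eq_zero.1 ((hsum _).trans (hinr j))).resolve_left (hN i).ne'

end Consensus

section DUCA

variable {N m p : ℕ} {E : Type*} {X : Set E} {F : E → ℝ}
  {G : E → Idx N m p → ℝ} {ρ : ℝ} {A H S : Matrix (Idx N m p) (Idx N m p) ℝ} {x : ℕ → E}
  {y z : ℕ → Idx N m p → ℝ} {xs : E} {mus : Fin m → ℝ} {lams : Fin p → ℝ}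

/-- The DUCA iterations for the objective `F`, the stacked constraint map `G` and the weights
`A`, `D = A + ρ H` and `S = H̃^{1/2}`. -/
structure IsDUCA (X : Set E) (F : E → ℝ) (G : E → Idx N m p → ℝ) (ρ : ℝ)
    (A H S : Matrix (Idx N m p) (Idx N m p) ℝ) (x : ℕ → E) (y z : ℕ → Idx N m p → ℝ) :
    Prop where
  mem : ∀ k, x (k + 1) ∈ X
  isMinOn : ∀ k, IsMinOn (fun w ↦ F w +
    1 / 2 * quadForm (A + ρ • H)⁻¹ (projK (A *ᵥ y k - S *ᵥ z k + G w))) X (x (k + 1))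
  y_succ : ∀ k, y (k + 1) = projK ((A + ρ • H)⁻¹ *ᵥ (A *ᵥ y k - S *ᵥ z k + G (x (k + 1))))
  z_succ : ∀ k, z (k + 1) = z k + ρ • S *ᵥ y (k + 1)

/-- A saddle point of the Lagrangian of `min F` over `X` subject to the coupled constraints: the
primal point `xs` is feasible, and `mus`, `lams` are optimal multipliers. -/
structure IsSaddlePoint (X : Set E) (F : E → ℝ) (G : E → Idx N m p → ℝ) (xs : E)
    (mus : Fin m → ℝ) (lams : Fin p → ℝ) : Prop where
  mem : xs ∈ X
  sum_inl_nonpos : ∀ j, ∑ i, G xs (i, .inl j) ≤ 0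
  sum_inr_eq_zero : ∀ j, ∑ i, G xs (i, .inr j) = 0
  mus_nonneg : ∀ j, 0 ≤ mus j
  slackness : ∑ j, mus j * ∑ i, G xs (i, .inl j) = 0
  lagrangian_le : ∀ w ∈ X,
    F xs + (∑ j, mus j * ∑ i, G xs (i, .inl j)) + (∑ j, lams j * ∑ i, G xs (i, .inr j))
      ≤ F w + (∑ j, mus j * ∑ i, G w (i, .inl j)) + (∑ j, lams j * ∑ i, G w (i, .inr j))

lemma IsSaddlePoint.memK_multiplier (h : IsSaddlePoint X F G xs mus lams) :
    memK (N := N) (Sum.elim mus lams ∘ Prod.snd) :=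
  fun _ j ↦ h.mus_nonneg j

lemma IsSaddlePoint.le_add_dotProduct (h : IsSaddlePoint X F G xs mus lams) {w : E}
    (hw : w ∈ X) : F xs ≤ F w + (Sum.elim mus lams ∘ Prod.snd) ⬝ᵥ G w := by
  have hle := h.lagrangian_le w hw
  simp only [h.slackness, h.sum_inr_eq_zero, mul_zero, Finset.sum_const_zero, add_zero] at hle
  simpa only [comp_snd_dotProduct, Fintype.sum_sum_type, Sum.elim_inl, Sum.elim_inr, add_assoc]
    using hle

lemma IsDUCA.y_succ_eq_mulVec_projK (hM : IsAdmissible ρ A H S) (h : IsDUCA X F G ρ A H S x y z)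
    (k : ℕ) :
    y (k + 1) = (A + ρ • H)⁻¹ *ᵥ projK (A *ᵥ y k - S *ᵥ z k + G (x (k + 1))) := by
  obtain ⟨e, he, hD⟩ := hM.exists_inv_eq_diagonal
  rw [h.y_succ, hD, projK_diagonal_mulVec he]

lemma IsDUCA.memK_y_succ (h : IsDUCA X F G ρ A H S x y z) (k : ℕ) : memK (y (k + 1)) :=
  h.y_succ k ▸ memK_projK _

lemma IsDUCA.exists_constraint_eq (hM : IsAdmissible ρ A H S) (h : IsDUCA X F G ρ A H S x y z)
    (k : ℕ) : ∃ π, memKpolar π ∧ y (k + 1) ⬝ᵥ π = 0 ∧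
      G (x (k + 1)) = (A + ρ • H) *ᵥ y (k + 1) + π - A *ᵥ y k + S *ᵥ z k := by
  set u := A *ᵥ y k - S *ᵥ z k + G (x (k + 1)) with hu
  obtain ⟨e, -, hD⟩ := hM.exists_inv_eq_diagonal
  have hy : y (k + 1) = (A + ρ • H)⁻¹ *ᵥ projK u := h.y_succ_eq_mulVec_projK hM k
  refine ⟨projKpolar u, memKpolar_projKpolar u, ?_, ?_⟩
  · rw [hy, hD, diagonal_mulVec_projK_dotProduct_projKpolar]
  · have hinv := mul_nonsing_inv _ ((isUnit_iff_isUnit_det _).1 hM.posDef.isUnit)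
    rw [hy, mulVec_mulVec, hinv, one_mulVec, projK_add_projKpolar, hu]
    abel

lemma IsDUCA.consensus_dotProduct_le (hM : IsAdmissible ρ A H S) (h : IsDUCA X F G ρ A H S x y z)
    {q : Blk m p → ℝ} (hq : memK (N := N) (q ∘ Prod.snd)) (k : ℕ) :
    (q ∘ Prod.snd) ⬝ᵥ G (x (k + 1))
      ≤ (q ∘ Prod.snd) ⬝ᵥ A *ᵥ y (k + 1) - (q ∘ Prod.snd) ⬝ᵥ A *ᵥ y k := by
  obtain ⟨π, hπ, -, hτ⟩ := h.exists_constraint_eq hM k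
  have hH := dotProduct_mulVec_eq_zero_of_isSymm hM.isSymm_H (hM.mulVec_consensus_H q) (y (k + 1))
  have hS := dotProduct_mulVec_eq_zero_of_isSymm hM.isSymm_S (hM.mulVec_consensus_S q) (z k)
  simp only [hτ, add_mulVec, smul_mulVec, dotProduct_add, dotProduct_sub, dotProduct_smul, hH, hS,
    smul_zero, add_zero]
  linarith [hq.dotProduct_nonpos hπ]

variable [AddCommGroup E] [Module ℝ E]

lemma IsDUCA.lagrangian_le (hF : ConvexOn ℝ X F) (hG : IsKConvexOn X G)
    (hM : IsAdmissible ρ A H S) (h : IsDUCA X F G ρ A H S x y z) (k : ℕ) {w : E} (hw : w ∈ X) :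
    F (x (k + 1)) + y (k + 1) ⬝ᵥ G (x (k + 1)) ≤ F w + y (k + 1) ⬝ᵥ G w := by
  obtain ⟨e, he, hD⟩ := hM.exists_inv_eq_diagonal
  have hmin := h.isMinOn k
  rw [hD] at hmin
  rw [h.y_succ_eq_mulVec_projK hM, hD]
  exact lagrangian_le_of_isMinOn hF hG he (h.mem k) hw hmin

lemma IsDUCA.lagrangian_gap_le (hF : ConvexOn ℝ X F) (hG : IsKConvexOn X G)
    (hM : IsAdmissible ρ A H S) (h : IsDUCA X F G ρ A H S x y z)
    (hs : IsSaddlePoint X F G xs mus lams) {ζ : Idx N m p → ℝ}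
    (hζ : S *ᵥ (G xs - S *ᵥ ζ) = 0) {q : Blk m p → ℝ} (hq : memK (N := N) (q ∘ Prod.snd))
    (k : ℕ) :
    F (x (k + 1)) + (q ∘ Prod.snd) ⬝ᵥ G (x (k + 1)) - F xs
      ≤ gNormSq ρ A (y k - q ∘ Prod.snd) (z k - ζ) / 2
        - gNormSq ρ A (y (k + 1) - q ∘ Prod.snd) (z (k + 1) - ζ) / 2 := by
  obtain ⟨π, hπK, hyπ, hτ⟩ := h.exists_constraint_eq hM k
  have hπ : 0 ≤ (y (k + 1) - q ∘ Prod.snd) ⬝ᵥ π := by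
    rw [sub_dotProduct, hyπ, zero_sub, neg_nonneg]
    exact hq.dotProduct_nonpos hπK
  have henergy := gNormSq_sub_gNormSq_le_of_dual_step hM.rho_pos hM.posSemidef hM.isSymm_H
    hM.isSymm_S hM.posSemidef_sub (ζ := ζ) hτ hπ (hM.mulVec_consensus_H q)
    (hM.mulVec_consensus_S q)
  have hprimal := h.lagrangian_le hF hG hM k hs.mem
  have hfeasible := (h.memK_y_succ k).dotProduct_nonpos
    (hM.memKpolar_sub_mulVec_S hs.sum_inl_nonpos hs.sum_inr_eq_zero hζ)
  rw [← h.z_succ] at henergy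
  rw [sub_dotProduct] at henergy
  rw [dotProduct_sub] at hfeasible
  linarith

lemma IsDUCA.objective_average_sub_le (hF : ConvexOn ℝ X F) (hG : IsKConvexOn X G)
    (hM : IsAdmissible ρ A H S) (h : IsDUCA X F G ρ A H S x y z)
    (hs : IsSaddlePoint X F G xs mus lams) {ζ : Idx N m p → ℝ}
    (hζ : S *ᵥ (G xs - S *ᵥ ζ) = 0) {k : ℕ} (hk : 1 ≤ k) :
    F ((k : ℝ)⁻¹ • ∑ l ∈ Finset.Icc 1 k, x l) - F xs
      ≤ gNormSq ρ A (y 0) (z 0 - ζ) / 2 / k := by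
  have hgap (l : ℕ) : F (x (l + 1)) - F xs
      ≤ gNormSq ρ A (y l) (z l - ζ) / 2 - gNormSq ρ A (y (l + 1)) (z (l + 1) - ζ) / 2 := by
    simpa only [Pi.zero_comp, zero_dotProduct, add_zero, sub_zero] using
      h.lagrangian_gap_le hF hG hM hs hζ (q := 0) (fun _ _ ↦ le_rfl) l
  refine (convexOn_map_average_sub_le_of_telescoping hF h.mem hgap hk).trans ?_
  gcongr
  exact sub_le_self _ (div_nonneg (gNormSq_nonneg hM.rho_pos.le hM.posSemidef _ _) zero_le_two)

lemma IsDUCA.gNormSq_sub_le (hF : ConvexOn ℝ X F) (hG : IsKConvexOn X G)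
    (hM : IsAdmissible ρ A H S) (h : IsDUCA X F G ρ A H S x y z)
    (hs : IsSaddlePoint X F G xs mus lams) {ζ : Idx N m p → ℝ}
    (hζ : S *ᵥ (G xs - S *ᵥ ζ) = 0) (k : ℕ) :
    gNormSq ρ A (y k - Sum.elim mus lams ∘ Prod.snd) (z k - ζ)
      ≤ gNormSq ρ A (y 0 - Sum.elim mus lams ∘ Prod.snd) (z 0 - ζ) := by
  refine antitone_nat_of_succ_le
    (f := fun k ↦ gNormSq ρ A (y k - Sum.elim mus lams ∘ Prod.snd) (z k - ζ))
    (fun l ↦ ?_) k.zero_le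
  linarith [h.lagrangian_gap_le hF hG hM hs hζ hs.memK_multiplier l,
    hs.le_add_dotProduct (h.mem l)]

lemma IsDUCA.multiplier_dotProduct_average_le (hF : ConvexOn ℝ X F) (hG : IsKConvexOn X G)
    (hM : IsAdmissible ρ A H S) (h : IsDUCA X F G ρ A H S x y z)
    (hs : IsSaddlePoint X F G xs mus lams) {ζ : Idx N m p → ℝ}
    (hζ : S *ᵥ (G xs - S *ᵥ ζ) = 0) {ys : Idx N m p → ℝ}
    (hys : ys = Sum.elim mus lams ∘ Prod.snd) {k : ℕ} (hk : 1 ≤ k) :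
    ys ⬝ᵥ G ((k : ℝ)⁻¹ • ∑ l ∈ Finset.Icc 1 k, x l)
      ≤ √(quadForm A ys) *
        (√(quadForm A (y 0 - ys)) + √(gNormSq ρ A (y 0 - ys) (z 0 - ζ))) / k := by
  subst hys
  set ys : Idx N m p → ℝ := Sum.elim mus lams ∘ Prod.snd
  have hlast : √(quadForm A (y k - ys)) ≤ √(gNormSq ρ A (y 0 - ys) (z 0 - ζ)) :=
    Real.sqrt_le_sqrt ((quadForm_le_gNormSq hM.rho_pos.le _ _).trans
      (h.gNormSq_sub_le hF hG hM hs hζ k))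
  have haverage := convexOn_map_average_sub_le_of_telescoping (c := 0)
    (V := fun l ↦ -(ys ⬝ᵥ A *ᵥ y l)) (hG.convexOn_dotProduct hs.memK_multiplier) h.mem
    (fun l ↦ by linarith [h.consensus_dotProduct_le hM hs.memK_multiplier l]) hk
  rw [sub_zero] at haverage
  refine haverage.trans ?_
  gcongr
  calc -(ys ⬝ᵥ A *ᵥ y 0) - -(ys ⬝ᵥ A *ᵥ y k)
      = ys ⬝ᵥ A *ᵥ (y k - ys) - ys ⬝ᵥ A *ᵥ (y 0 - ys) := by
        simp only [mulVec_sub, dotProduct_sub]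
        ring
    _ ≤ √(quadForm A ys) * √(quadForm A (y k - ys))
          + √(quadForm A ys) * √(quadForm A (y 0 - ys)) := by
        linarith [le_of_abs_le (abs_dotProduct_mulVec_le hM.posSemidef ys (y k - ys)),
          neg_le_of_abs_le (abs_dotProduct_mulVec_le hM.posSemidef ys (y 0 - ys))]
    _ ≤ √(quadForm A ys) *
          (√(quadForm A (y 0 - ys)) + √(gNormSq ρ A (y 0 - ys) (z 0 - ζ))) := by
        rw [← mul_add, add_comm]
        gcongr

lemma IsDUCA.neg_div_le_objective_average_sub (hF : ConvexOn ℝ X F) (hG : IsKConvexOn X G)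
    (hM : IsAdmissible ρ A H S) (h : IsDUCA X F G ρ A H S x y z)
    (hs : IsSaddlePoint X F G xs mus lams) {ζ : Idx N m p → ℝ}
    (hζ : S *ᵥ (G xs - S *ᵥ ζ) = 0) {ys : Idx N m p → ℝ}
    (hys : ys = Sum.elim mus lams ∘ Prod.snd) {k : ℕ} (hk : 1 ≤ k) :
    -(√(quadForm A ys) *
        (√(quadForm A (y 0 - ys)) + √(gNormSq ρ A (y 0 - ys) (z 0 - ζ))) / k)
      ≤ F ((k : ℝ)⁻¹ • ∑ l ∈ Finset.Icc 1 k, x l) - F xs := by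
  have hmem : (k : ℝ)⁻¹ • ∑ l ∈ Finset.Icc 1 k, x l ∈ X := by
    simpa using convex_inv_card_smul_sum_mem hF.1 (Finset.nonempty_Icc.2 hk)
      fun _ ↦ mem_of_mem_Icc_of_forall_succ_mem h.mem
  linarith [hys ▸ hs.le_add_dotProduct hmem,
    h.multiplier_dotProduct_average_le hF hG hM hs hζ hys hk]

end DUCA

section Kronecker

variable {ι κ : Type*} [Fintype ι] [Fintype κ] [DecidableEq κ]

lemma kronecker_one_mulVec_apply (P : Matrix ι ι ℝ) (u : ι × κ → ℝ) (i : ι) (j : κ) :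
    ((P ⊗ₖ (1 : Matrix κ κ ℝ)) *ᵥ u) (i, j) = (P *ᵥ fun l ↦ u (l, j)) i := by
  simp [mulVec, dotProduct, Fintype.sum_prod_type, one_apply]

lemma kronecker_one_mulVec_eq_zero_iff {P : Matrix ι ι ℝ}
    (hP : ∀ v, P *ᵥ v = 0 ↔ ∃ t : ℝ, v = fun _ ↦ t) (u : ι × κ → ℝ) :
    (P ⊗ₖ (1 : Matrix κ κ ℝ)) *ᵥ u = 0 ↔ ∃ q : κ → ℝ, u = q ∘ Prod.snd := by
  have hblock : (P ⊗ₖ (1 : Matrix κ κ ℝ)) *ᵥ u = 0 ↔ ∀ j, P *ᵥ (fun l ↦ u (l, j)) = 0 := by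
    simp only [funext_iff, Prod.forall, kronecker_one_mulVec_apply, Pi.zero_apply]
    exact forall_comm
  simp only [hblock, hP, Classical.skolem, funext_iff, Prod.forall, Function.comp_apply]
  exact exists_congr fun _ ↦ forall_comm

lemma quadForm_kronecker_one_comp_snd (P : Matrix ι ι ℝ) (q : κ → ℝ) :
    quadForm (P ⊗ₖ (1 : Matrix κ κ ℝ)) (q ∘ Prod.snd)
      = (q ⬝ᵥ q) * quadForm P 1 := by
  have hrow (i : ι) (t : ℝ) : (P *ᵥ fun _ ↦ t) i = t * (P *ᵥ 1) i := by
    rw [← smul_eq_mul, ← Pi.smul_apply, ← mulVec_smul]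
    congr 2
    ext
    simp
  rw [quadForm, comp_snd_dotProduct, quadForm, one_dotProduct, dotProduct, Finset.sum_mul]
  simp only [kronecker_one_mulVec_apply, Function.comp_apply, hrow, ← Finset.mul_sum, mul_assoc]

variable {N m p : ℕ}

lemma isAdmissible_kronecker_one {ρ : ℝ} {PA PH PHt : Matrix (Fin N) (Fin N) ℝ}
    {S : Matrix (Idx N m p) (Idx N m p) ℝ} (hρ : 0 < ρ) (hPA : PA.PosSemidef)
    (hPH : PH.IsSymm) (hdiag : (PA + ρ • PH).IsDiag) (hpos : (PA + ρ • PH).PosDef)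
    (hsub : ((2 : ℝ) • PH - PHt).PosSemidef) (hPHnull : ∀ t : ℝ, PH *ᵥ (fun _ ↦ t) = 0)
    (hPHtnull : ∀ v, PHt *ᵥ v = 0 ↔ ∃ t : ℝ, v = fun _ ↦ t) (hS : S.IsSymm)
    (hSS : S * S = PHt ⊗ₖ (1 : Matrix (Blk m p) (Blk m p) ℝ)) :
    IsAdmissible ρ (PA ⊗ₖ (1 : Matrix (Blk m p) (Blk m p) ℝ))
      (PH ⊗ₖ (1 : Matrix (Blk m p) (Blk m p) ℝ)) S where
  rho_pos := hρ
  posSemidef := hPA.kronecker .one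
  isSymm_H := by rw [IsSymm, ← kroneckerMap_transpose, hPH.eq, transpose_one]
  isSymm_S := hS
  posSemidef_sub := by
    have hkronecker : (2 : ℝ) • (PH ⊗ₖ (1 : Matrix (Blk m p) (Blk m p) ℝ)) - S * S
        = ((2 : ℝ) • PH - PHt) ⊗ₖ 1 := by
      ext
      simp only [hSS, Matrix.sub_apply, Matrix.smul_apply, kroneckerMap_apply, smul_eq_mul, sub_mul,
        mul_assoc]
    exact hkronecker ▸ hsub.kronecker .one
  isDiag := by
    rw [← smul_kronecker, ← add_kronecker]
    exact hdiag.kronecker isDiag_one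
  posDef := by
    rw [← smul_kronecker, ← add_kronecker]
    exact hpos.kronecker .one
  mulVec_consensus_H q := by
    ext ⟨i, j⟩
    rw [kronecker_one_mulVec_apply]
    exact congrFun (hPHnull (q j)) i
  mulVec_S_eq_zero_iff v := by
    have hnull := conjTranspose_mul_self_mulVec_eq_zero S v
    rw [conjTranspose_eq_transpose_of_trivial, hS.eq, hSS] at hnull
    rw [← hnull, kronecker_one_mulVec_eq_zero_iff hPHtnull]

lemma sqrt_quadForm_kronecker_one_multiplier_le {P : Matrix (Fin N) (Fin N) ℝ}
    (hP : P.IsSymm) {l : ℝ}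
    (hl : ∀ (μ : ℝ) (v : Fin N → ℝ), v ≠ 0 → P *ᵥ v = μ • v → μ ≤ l) (mus : Fin m → ℝ)
    (lams : Fin p → ℝ) :
    √(quadForm (P ⊗ₖ (1 : Matrix (Blk m p) (Blk m p) ℝ)) (Sum.elim mus lams ∘ Prod.snd))
      ≤ √((∑ j, mus j ^ 2) + ∑ j, lams j ^ 2) * √(N * l) := by
  have hnorm : Sum.elim mus lams ⬝ᵥ Sum.elim mus lams = (∑ j, mus j ^ 2) + ∑ j, lams j ^ 2 := by
    simp only [dotProduct, Fintype.sum_sum_type, Sum.elim_inl, Sum.elim_inr, sq]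
  have hone : quadForm P 1 ≤ N * l := by
    simpa [mul_comm] using quadForm_le_mul_dotProduct_self hP hl 1
  rw [quadForm_kronecker_one_comp_snd, hnorm, Real.sqrt_mul (by positivity)]
  gcongr

end Kronecker

section Separable

lemma convexOn_pi_sum {ι : Type*} [Fintype ι] {E : ι → Type*} [∀ i, AddCommGroup (E i)]
    [∀ i, Module ℝ (E i)] {X : ∀ i, Set (E i)} {f : ∀ i, E i → ℝ}
    (hf : ∀ i, ConvexOn ℝ (X i) (f i)) :
    ConvexOn ℝ (Set.univ.pi X) fun x ↦ ∑ i, f i (x i) :=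
  have hX : Convex ℝ (Set.univ.pi X) := convex_pi fun i _ ↦ (hf i).1
  convexOn_finset_sum hX fun i _ ↦
    ((hf i).comp_linearMap (LinearMap.proj i)).subset (fun _ hx ↦ hx i trivial) hX

variable {N m p : ℕ} {E : Fin N → Type*}

/-- The map `g̃` stacking the local constraint blocks `(g_i(x_i), h_i(x_i))`. -/
def stackedConstraint (g : ∀ i, E i → Fin m → ℝ) (h : ∀ i, E i → Fin p → ℝ) (x : ∀ i, E i) :
    Idx N m p → ℝ :=
  fun ij ↦ Sum.elim (g ij.1 (x ij.1)) (h ij.1 (x ij.1)) ij.2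

lemma isKConvexOn_stackedConstraint [∀ i, AddCommGroup (E i)] [∀ i, Module ℝ (E i)]
    {X : ∀ i, Set (E i)} (hX : ∀ i, Convex ℝ (X i)) {g : ∀ i, E i → Fin m → ℝ}
    (hg : ∀ i j, ConvexOn ℝ (X i) fun x ↦ g i x j) (L : ∀ i, E i →ₗ[ℝ] Fin p → ℝ)
    (c : Fin N → Fin p → ℝ) :
    IsKConvexOn (Set.univ.pi X) (stackedConstraint g fun i x ↦ L i x + c i) := by
  refine ⟨convex_pi fun i _ ↦ hX i, fun x hx w hw s t hs ht hst ↦ ⟨fun i j ↦ ?_, fun i j ↦ ?_⟩⟩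
  · exact sub_nonpos.2 ((hg i j).2 (hx i trivial) (hw i trivial) hs ht hst)
  · simp only [stackedConstraint, Pi.sub_apply, Pi.add_apply, Pi.smul_apply, map_add, map_smul,
      Sum.elim_inr, smul_eq_mul]
    linear_combination -hst * c i j

end Separable

theorem stmt1_general {N m p : ℕ} {E : Type*} [AddCommGroup E] [Module ℝ E] {X : Set E}
    {F : E → ℝ} (hF : ConvexOn ℝ X F) {G : E → Idx N m p → ℝ} (hG : IsKConvexOn X G)
    {ρ : ℝ} (hρ : 0 < ρ) {PA PH PHt : Matrix (Fin N) (Fin N) ℝ}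
    (hPA : PA.PosSemidef) (hPH : PH.IsSymm) (hdiag : (PA + ρ • PH).IsDiag)
    (hpos : (PA + ρ • PH).PosDef) (hsub : ((2 : ℝ) • PH - PHt).PosSemidef)
    (hPHnull : ∀ t : ℝ, PH *ᵥ (fun _ ↦ t) = 0)
    (hPHtnull : ∀ v, PHt *ᵥ v = 0 ↔ ∃ t : ℝ, v = fun _ ↦ t)
    {S Sd Hd : Matrix (Idx N m p) (Idx N m p) ℝ} (hS : S.IsSymm)
    (hSS : S * S = PHt ⊗ₖ (1 : Matrix (Blk m p) (Blk m p) ℝ)) (hSd : IsMPInv S Sd)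
    (hHd : S * S * Hd * (S * S) = S * S) {lam1 : ℝ}
    (hlam1 : ∀ (μ : ℝ) (v : Fin N → ℝ), v ≠ 0 → PA *ᵥ v = μ • v → μ ≤ lam1)
    {A : Matrix (Idx N m p) (Idx N m p) ℝ}
    (hA : A = PA ⊗ₖ (1 : Matrix (Blk m p) (Blk m p) ℝ)) {x : ℕ → E} {y z : ℕ → Idx N m p → ℝ}
    (hduca : IsDUCA X F G ρ A (PH ⊗ₖ (1 : Matrix (Blk m p) (Blk m p) ℝ)) S x y z)
    {xs : E} {mus : Fin m → ℝ} {lams : Fin p → ℝ} (hs : IsSaddlePoint X F G xs mus lams)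
    {ys zs : Idx N m p → ℝ} (hys : ys = Sum.elim mus lams ∘ Prod.snd) (hzs : zs = Sd *ᵥ G xs)
    {k : ℕ} (hk : 1 ≤ k) {xbar : E} (hxbar : xbar = (k : ℝ)⁻¹ • ∑ l ∈ Finset.Icc 1 k, x l) :
    -((√((∑ j, mus j ^ 2) + ∑ j, lams j ^ 2) * √(N * lam1) *
          (√(quadForm A (y 0 - ys)) + √(gNormSq ρ A (y 0 - ys) (z 0 - zs)))) / k)
        ≤ F xbar - F xs
      ∧ F xbar - F xs
        ≤ (1 / (2 * ρ) * quadForm Hd (S *ᵥ z 0 - S *ᵥ zs) + 1 / 2 * quadForm A (y 0)) / k := by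
  have hM : IsAdmissible ρ A (PH ⊗ₖ (1 : Matrix (Blk m p) (Blk m p) ℝ)) S :=
    hA ▸ isAdmissible_kronecker_one hρ hPA hPH hdiag hpos hsub hPHnull hPHtnull hS hSS
  have hzs₀ : S *ᵥ (G xs - S *ᵥ zs) = 0 := hzs ▸ hSd.mulVec_sub_mulVec_mulVec_eq_zero hS _
  subst hxbar
  constructor
  · have hmultiplier : √(quadForm A ys) ≤ √((∑ j, mus j ^ 2) + ∑ j, lams j ^ 2) * √(N * lam1) :=
      hA ▸ hys ▸ sqrt_quadForm_kronecker_one_multiplier_le (isSymm_of_posSemidef hPA) hlam1 _ _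
    refine le_trans ?_ (hduca.neg_div_le_objective_average_sub hF hG hM hs hzs₀ hys hk)
    gcongr
  · obtain ⟨ζ, hζ, hnorm⟩ := exists_mulVec_eq_and_dotProduct_self_eq_quadForm hS hHd (z 0) zs
    have hupper := hduca.objective_average_sub_le hF hG hM hs (hζ ▸ hzs₀) hk
    rw [gNormSq, hnorm] at hupper
    refine hupper.trans_eq ?_
    field

theorem stmt1
    (N m p : ℕ) (hN : 1 ≤ N) (hm : 1 ≤ m) (hp : 1 ≤ p)
    (d : Fin N → ℕ)
    (X : ∀ i : Fin N, Set (Fin (d i) → ℝ))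
    (hXne : ∀ i, (X i).Nonempty) (hXcl : ∀ i, IsClosed (X i))
    (hXcv : ∀ i, Convex ℝ (X i))
    (f : ∀ i : Fin N, (Fin (d i) → ℝ) → ℝ)
    (hf : ∀ i, ConvexOn ℝ Set.univ (f i))
    (g : ∀ i : Fin N, (Fin (d i) → ℝ) → Fin m → ℝ)
    (hg : ∀ i j, ConvexOn ℝ Set.univ (fun xi => g i xi j))
    (B : ∀ i : Fin N, Matrix (Fin p) (Fin (d i)) ℝ) (c : ∀ i : Fin N, Fin p → ℝ)
    (F : (∀ i, Fin (d i) → ℝ) → ℝ) (hF : ∀ x, F x = ∑ i, f i (x i))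
    (tg : (∀ i, Fin (d i) → ℝ) → Idx N m p → ℝ)
    (htg1 : ∀ x (i : Fin N) (j : Fin m), tg x (i, Sum.inl j) = g i (x i) j)
    (htg2 : ∀ x (i : Fin N) (j : Fin p), tg x (i, Sum.inr j) = (B i *ᵥ x i + c i) j)
    (ρ : ℝ) (hρ : 0 < ρ)
    (PA PH PHt : Matrix (Fin N) (Fin N) ℝ)
    (hPA : PA.PosSemidef) (hPH : PH.PosSemidef) (hPHt : PHt.PosSemidef)
    (hDdiag : (PA + ρ • PH).IsDiag) (hDpd : (PA + ρ • PH).PosDef)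
    (hHHt : (PH - PHt).PosSemidef)
    (hPHnull : ∀ v : Fin N → ℝ, PH *ᵥ v = 0 ↔ ∃ t : ℝ, v = fun _ => t)
    (hPHtnull : ∀ v : Fin N → ℝ, PHt *ᵥ v = 0 ↔ ∃ t : ℝ, v = fun _ => t)
    (A Htld D : Matrix (Idx N m p) (Idx N m p) ℝ)
    (hA : A = PA ⊗ₖ (1 : Matrix (Blk m p) (Blk m p) ℝ))
    (hHtld : Htld = PHt ⊗ₖ (1 : Matrix (Blk m p) (Blk m p) ℝ))
    (hD : D = A + ρ • (PH ⊗ₖ (1 : Matrix (Blk m p) (Blk m p) ℝ)))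
    (Hhalf : Matrix (Idx N m p) (Idx N m p) ℝ)
    (hHhalfpsd : Hhalf.PosSemidef) (hHhalfsq : Hhalf * Hhalf = Htld)
    (hXcp : ∀ i, IsCompact (X i))
    (Htdag : Matrix (Idx N m p) (Idx N m p) ℝ) (hHtdag : IsMPInv Htld Htdag)
    (Hhalfdag : Matrix (Idx N m p) (Idx N m p) ℝ) (hHhalfdag : IsMPInv Hhalf Hhalfdag)
    (lam1 : ℝ)
    (hlam1ev : ∃ v : Fin N → ℝ, v ≠ 0 ∧ PA *ᵥ v = lam1 • v)
    (hlam1max : ∀ (μ : ℝ) (v : Fin N → ℝ), v ≠ 0 → PA *ᵥ v = μ • v → μ ≤ lam1)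
    (x : ℕ → ∀ i, Fin (d i) → ℝ) (y z : ℕ → Idx N m p → ℝ)
    (hxX : ∀ k, ∀ i, x (k + 1) i ∈ X i)
    (hy0 : memK (y 0))
    (hyupd : ∀ k, y (k + 1) = projK (D⁻¹ *ᵥ ((A *ᵥ y k) - (Hhalf *ᵥ z k) + tg (x (k + 1)))))
    (hzupd : ∀ k, z (k + 1) = z k + ρ • (Hhalf *ᵥ y (k + 1)))
    (hxmin : ∀ k, ∀ w, (∀ i, w i ∈ X i) →
      F (x (k + 1))
          + (1 / 2) * quadForm D⁻¹ (projK ((A *ᵥ y k) - (Hhalf *ᵥ z k) + tg (x (k + 1))))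
        ≤ F w + (1 / 2) * quadForm D⁻¹ (projK ((A *ᵥ y k) - (Hhalf *ᵥ z k) + tg w)))
    (xs : ∀ i, Fin (d i) → ℝ) (hxsX : ∀ i, xs i ∈ X i)
    (hxsg : ∀ j, (∑ i, g i (xs i) j) ≤ 0)
    (hxsh : ∀ j, (∑ i, (B i *ᵥ xs i + c i) j) = 0)
    (mus : Fin m → ℝ) (hmus : ∀ j, 0 ≤ mus j) (lams : Fin p → ℝ)
    (hcs : (∑ j, mus j * ∑ i, g i (xs i) j) = 0)
    (hsaddle : ∀ w, (∀ i, w i ∈ X i) →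
      F xs + (∑ j, mus j * ∑ i, g i (xs i) j) + (∑ j, lams j * ∑ i, (B i *ᵥ xs i + c i) j)
        ≤ F w + (∑ j, mus j * ∑ i, g i (w i) j) + (∑ j, lams j * ∑ i, (B i *ᵥ w i + c i) j))
    (ys : Idx N m p → ℝ) (hys : ∀ (i : Fin N) (j : Blk m p), ys (i, j) = Sum.elim mus lams j)
    (zstar vstar : Idx N m p → ℝ)
    (hzstar : zstar = Hhalfdag *ᵥ tg xs)
    (hvstar : vstar = Hhalf *ᵥ zstar)
    (xbar : ℕ → ∀ i, Fin (d i) → ℝ)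
    (hxbar : ∀ k (i : Fin N) (j : Fin (d i)),
      xbar k i j = (∑ l ∈ Finset.Icc 1 k, x l i j) / (k : ℝ))
    :
    ∀ k : ℕ, 1 ≤ k →
      -((Real.sqrt ((∑ j, (mus j) ^ 2) + ∑ j, (lams j) ^ 2) * Real.sqrt ((N : ℝ) * lam1) *
            (Real.sqrt (quadForm A (y 0 - ys))
              + Real.sqrt (quadForm A (y 0 - ys) + ((z 0 - zstar) ⬝ᵥ (z 0 - zstar)) / ρ))) / (k : ℝ))
          ≤ F (xbar k) - F xs
        ∧ F (xbar k) - F xs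
          ≤ ((1 / (2 * ρ)) * quadForm Htdag ((Hhalf *ᵥ z 0) - vstar)
              + (1 / 2) * quadForm A (y 0)) / (k : ℝ) := by
  obtain rfl : F = fun x ↦ ∑ i, f i (x i) := funext hF
  obtain rfl : tg = stackedConstraint g fun i v ↦ (B i).mulVecLin v + c i := by
    ext w ⟨i, j | j⟩
    exacts [htg1 w i j, htg2 w i j]
  subst hA hHtld hD hvstar
  exact fun k hk ↦ stmt1_general
    (convexOn_pi_sum fun i ↦ (hf i).subset (Set.subset_univ _) (hXcv i))
    (isKConvexOn_stackedConstraint hXcv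
      (fun i j ↦ (hg i j).subset (Set.subset_univ _) (hXcv i)) (fun i ↦ (B i).mulVecLin) c) hρ hPA
    (isSymm_of_posSemidef hPH) hDdiag hDpd
    (by simpa only [two_smul, add_sub_assoc] using hPH.add hHHt) (fun t ↦ (hPHnull _).2 ⟨t, rfl⟩)
    hPHtnull (isSymm_of_posSemidef hHhalfpsd) hHhalfsq hHhalfdag (hHhalfsq ▸ hHtdag.1) hlam1max rfl
    ⟨fun k i _ ↦ hxX k i, fun k w hw ↦ hxmin k w fun i ↦ hw i trivial, hyupd, hzupd⟩
    ⟨fun i _ ↦ hxsX i, hxsg, hxsh, hmus, hcs, fun w hw ↦ hsaddle w fun i ↦ hw i trivial⟩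
    (funext fun ij ↦ hys ij.1 ij.2) hzstar hk (by ext; simp [hxbar, div_eq_inv_mul])
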